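/- Let Ω₁, Ω₂, a₁, a₂, a₃ ∈ ℝ and I = (I₁, I₂) ∈ ℝ². Set ω₁ := Ω₁ I₁, ω₂ := Ω₂ I₂, ω₃ := ω₁ + ω₂ − 1, and assume ω₁ ≠ 0, ω₂ ≠ 0, ω₃ ≠ 0. Let p₀(t) := 2/cosh t and g(φ₁, φ₂, t) := a₁ cos φ₁ + a₂ cos φ₂ + a₃ cos(φ₁ + φ₂ − t). Then for all τ ∈ ℝ and all (φ₁, φ₂, s) ∈ ℝ³, the improper integral (1/2) ∫_{−∞}^{∞} p₀(τ+σ)² · g(φ₁ + ω₁σ, φ₂ + ω₂σ, s + σ) dσ converges and equals Σ_{i=1}^{3} A_i cos(φ_i − ω_i τ), where φ₃ := φ₁ + φ₂ − s and A_i := 2π ω_i a_i / sinh(π ω_i / 2) for i = 1, 2, 3. -/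

import Mathlib

open MeasureTheory Real

theorem hasDerivAt_sigmoid_two_mul (t : ℝ) :
    HasDerivAt (fun t : ℝ => sigmoid (2 * t)) (1 / (2 * cosh t ^ 2)) t := by
  have h := (hasDerivAt_sigmoid (2 * t)).comp t ((hasDerivAt_id t).const_mul 2)
  refine h.congr_deriv ?_
  have he : exp (-(2 * t)) = exp (-t) ^ 2 := by rw [← exp_nat_mul]; congr 1; push_cast; ring
  rw [sigmoid_def, he, cosh_eq, exp_neg]
  have := exp_pos t
  field_simp
  ring

theorem injective_sigmoid_two_mul : Function.Injective (fun t : ℝ => sigmoid (2 * t)) :=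
  sigmoid_injective.comp (mul_right_injective₀ two_ne_zero)

theorem image_univ_sigmoid_two_mul :
    (fun t : ℝ => sigmoid (2 * t)) '' Set.univ = Set.Ioo 0 1 := by
  rw [Set.image_univ, ← range_sigmoid]
  exact (mul_left_surjective₀ two_ne_zero).range_comp sigmoid

theorem integrable_one_div_cosh_sq : Integrable (fun t : ℝ => 1 / cosh t ^ 2) := by
  have h := (integrableOn_image_iff_integrableOn_abs_deriv_smul MeasurableSet.univ
    (fun t _ => (hasDerivAt_sigmoid_two_mul t).hasDerivWithinAt)
    injective_sigmoid_two_mul.injOn (fun _ => (1 : ℝ))).1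
    (by rw [image_univ_sigmoid_two_mul]; exact integrableOn_const (by simp))
  rw [integrableOn_univ] at h
  refine (h.const_mul 2).congr (.of_forall fun t => ?_)
  have := cosh_pos t
  simp only [smul_eq_mul, mul_one]
  rw [abs_of_pos (by positivity)]
  field_simp

theorem integrable_one_div_cosh_sq_mul_cexp (ω : ℝ) :
    Integrable (fun t : ℝ => ((1 / cosh t ^ 2 : ℝ) : ℂ) * Complex.exp ((ω * t : ℝ) * Complex.I)) :=
  integrable_one_div_cosh_sq.ofReal.mul_bdd (c := 1)
    (Continuous.aestronglyMeasurable (by fun_prop))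
    (.of_forall fun t => (Complex.norm_exp_ofReal_mul_I _).le)

/-- In the variable `x = sigmoid (2 * t)` the integrand of a Beta function is an exponential. -/
theorem sigmoid_cpow_mul_one_sub_sigmoid_cpow (z : ℂ) (t : ℝ) :
    (sigmoid (2 * t) : ℂ) ^ z * (1 - (sigmoid (2 * t) : ℂ)) ^ (-z) = Complex.exp (2 * t * z) := by
  have h1 : 0 < sigmoid (2 * t) := sigmoid_pos _
  have h2 : 0 < sigmoid (-(2 * t)) := sigmoid_pos _
  have h3 : log (sigmoid (2 * t)) - log (sigmoid (-(2 * t))) = 2 * t := by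
    rw [← sigmoid_mul_rexp_neg, log_mul h1.ne' (exp_pos _).ne', log_exp]
    ring
  rw [← Complex.ofReal_one, ← Complex.ofReal_sub, ← sigmoid_neg,
    Complex.cpow_def_of_ne_zero (by exact_mod_cast h1.ne'),
    Complex.cpow_def_of_ne_zero (by exact_mod_cast h2.ne'),
    ← Complex.ofReal_log h1.le, ← Complex.ofReal_log h2.le, ← Complex.exp_add]
  congr 1
  have h4 : ((2 * t : ℝ) : ℂ) = _ := congrArg Complex.ofReal h3.symm
  push_cast at h4
  rw [h4]
  ring

theorem betaIntegral_one_add_one_sub (z : ℂ) :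
    Complex.betaIntegral (1 + z) (1 - z)
      = ∫ t : ℝ, ((1 / (2 * cosh t ^ 2) : ℝ) : ℂ) * Complex.exp (2 * t * z) := by
  rw [Complex.betaIntegral, intervalIntegral.integral_of_le zero_le_one,
    integral_Ioc_eq_integral_Ioo, ← image_univ_sigmoid_two_mul,
    integral_image_eq_integral_abs_deriv_smul MeasurableSet.univ
    (fun t _ => (hasDerivAt_sigmoid_two_mul t).hasDerivWithinAt)
    injective_sigmoid_two_mul.injOn, setIntegral_univ]
  congr 1 with t
  have := cosh_pos t
  rw [abs_of_pos (by positivity), Complex.real_smul, ← sigmoid_cpow_mul_one_sub_sigmoid_cpow z t]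
  ring_nf

theorem betaIntegral_one_add_one_sub_eq {z : ℂ} (hz : z ≠ 0) (h₁ : -1 < z.re) (h₂ : z.re < 1) :
    Complex.betaIntegral (1 + z) (1 - z) = π * z / Complex.sin (π * z) := by
  have h := Complex.Gamma_mul_Gamma_eq_betaIntegral (s := 1 + z) (t := 1 - z)
    (by simp; linarith) (by simp; linarith)
  have h2 : Complex.Gamma (1 + z + (1 - z)) = 1 := by
    rw [show 1 + z + (1 - z) = (1 : ℕ) + 1 by push_cast; ring, Complex.Gamma_nat_eq_factorial]
    simp
  rw [h2, one_mul, add_comm 1 z, Complex.Gamma_add_one z hz, mul_assoc,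
    Complex.Gamma_mul_Gamma_one_sub] at h
  rw [add_comm 1 z, ← h]
  ring

/-- The Fourier transform of `1 / cosh ^ 2`. -/
theorem integral_one_div_cosh_sq_mul_cexp {ω : ℝ} (hω : ω ≠ 0) :
    ∫ t : ℝ, ((1 / cosh t ^ 2 : ℝ) : ℂ) * Complex.exp ((ω * t : ℝ) * Complex.I)
      = ((π * ω / sinh (π * ω / 2) : ℝ) : ℂ) := by
  have hz : (ω / 2 * Complex.I : ℂ) ≠ 0 := by simp [hω]
  have h := (betaIntegral_one_add_one_sub (ω / 2 * Complex.I)).symm.trans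
    (betaIntegral_one_add_one_sub_eq hz (by simp) (by simp))
  calc _ = 2 * ∫ t : ℝ, ((1 / (2 * cosh t ^ 2) : ℝ) : ℂ)
        * Complex.exp (2 * t * (ω / 2 * Complex.I)) := by
        rw [← integral_const_mul]
        congr 1 with t
        rw [show (2 * t * (ω / 2 * Complex.I) : ℂ) = (ω * t : ℝ) * Complex.I by push_cast; ring,
          show (1 / cosh t ^ 2 : ℝ) = 2 * (1 / (2 * cosh t ^ 2)) by
            have := cosh_pos t
            field_simp]
        push_cast
        ring
    _ = _ := by
        have hs : Complex.sinh (π * ω / 2) ≠ 0 := by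
          have : sinh (π * ω / 2) ≠ 0 := by simp [sinh_eq_zero, hω, pi_ne_zero]
          exact_mod_cast this
        rw [h, ← mul_assoc, Complex.sin_mul_I, ← mul_div_assoc]
        push_cast
        field_simp

theorem integrable_one_div_cosh_sq_mul_cos (ω φ : ℝ) :
    Integrable (fun t : ℝ => 1 / cosh t ^ 2 * cos (φ + ω * t)) :=
  integrable_one_div_cosh_sq.mul_bdd (c := 1)
    (Continuous.aestronglyMeasurable (by fun_prop)) (.of_forall fun _ => abs_cos_le_one _)

theorem integral_one_div_cosh_sq_mul_cos {ω : ℝ} (hω : ω ≠ 0) (φ : ℝ) :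
    ∫ t : ℝ, 1 / cosh t ^ 2 * cos (φ + ω * t) = π * ω / sinh (π * ω / 2) * cos φ := by
  have h := integral_re ((integrable_one_div_cosh_sq_mul_cexp ω).const_mul
    (Complex.exp (φ * Complex.I)))
  rw [integral_const_mul, integral_one_div_cosh_sq_mul_cexp hω, RCLike.re_eq_complex_re,
    Complex.re_mul_ofReal, Complex.exp_ofReal_mul_I_re] at h
  rw [mul_comm _ (cos φ), ← h]
  congr 1 with t
  rw [mul_left_comm, ← Complex.exp_add, ← add_mul, ← Complex.ofReal_add,
    Complex.re_ofReal_mul, Complex.exp_ofReal_mul_I_re]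

theorem integrable_separatrix_mul_cos (τ ω φ : ℝ) :
    Integrable (fun σ : ℝ => 1 / cosh (τ + σ) ^ 2 * cos (φ + ω * σ)) := by
  convert! (integrable_one_div_cosh_sq_mul_cos ω (φ - ω * τ)).comp_add_left τ using 4
  ring

theorem integral_separatrix_mul_cos {ω : ℝ} (hω : ω ≠ 0) (τ φ : ℝ) :
    ∫ σ : ℝ, 1 / cosh (τ + σ) ^ 2 * cos (φ + ω * σ)
      = π * ω / sinh (π * ω / 2) * cos (φ - ω * τ) := by
  rw [← integral_one_div_cosh_sq_mul_cos hω,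
    ← integral_add_left_eq_self (fun t => 1 / cosh t ^ 2 * cos (φ - ω * τ + ω * t)) τ]
  congr 1 with σ
  ring_nf

/-- the Melnikov (Poincaré) potential of the example Hamiltonian,
computed along the pendulum separatrix `p₀(t) = 2/cosh t`. -/
theorem stmt15 (Ω₁ Ω₂ a₁ a₂ a₃ I₁ I₂ : ℝ)
    (ω₁ ω₂ ω₃ : ℝ) (hω₁ : ω₁ = Ω₁ * I₁) (hω₂ : ω₂ = Ω₂ * I₂)
    (hω₃ : ω₃ = ω₁ + ω₂ - 1)
    (h1 : ω₁ ≠ 0) (h2 : ω₂ ≠ 0) (h3 : ω₃ ≠ 0)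
    (τ φ₁ φ₂ s : ℝ) :
    Integrable (fun σ : ℝ =>
      (1 / 2) * (2 / Real.cosh (τ + σ)) ^ 2 *
        (a₁ * Real.cos (φ₁ + ω₁ * σ) + a₂ * Real.cos (φ₂ + ω₂ * σ)
          + a₃ * Real.cos ((φ₁ + ω₁ * σ) + (φ₂ + ω₂ * σ) - (s + σ)))) ∧
    ∫ σ : ℝ, (1 / 2) * (2 / Real.cosh (τ + σ)) ^ 2 *
        (a₁ * Real.cos (φ₁ + ω₁ * σ) + a₂ * Real.cos (φ₂ + ω₂ * σ)
          + a₃ * Real.cos ((φ₁ + ω₁ * σ) + (φ₂ + ω₂ * σ) - (s + σ)))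
      = (2 * π * ω₁ * a₁ / Real.sinh (π * ω₁ / 2)) * Real.cos (φ₁ - ω₁ * τ)
        + (2 * π * ω₂ * a₂ / Real.sinh (π * ω₂ / 2)) * Real.cos (φ₂ - ω₂ * τ)
        + (2 * π * ω₃ * a₃ / Real.sinh (π * ω₃ / 2)) * Real.cos ((φ₁ + φ₂ - s) - ω₃ * τ) := by
  have hf : (fun σ : ℝ => (1 / 2) * (2 / Real.cosh (τ + σ)) ^ 2 *
        (a₁ * Real.cos (φ₁ + ω₁ * σ) + a₂ * Real.cos (φ₂ + ω₂ * σ)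
          + a₃ * Real.cos ((φ₁ + ω₁ * σ) + (φ₂ + ω₂ * σ) - (s + σ))))
      = fun σ => 2 * a₁ * (1 / cosh (τ + σ) ^ 2 * cos (φ₁ + ω₁ * σ))
        + 2 * a₂ * (1 / cosh (τ + σ) ^ 2 * cos (φ₂ + ω₂ * σ))
        + 2 * a₃ * (1 / cosh (τ + σ) ^ 2 * cos ((φ₁ + φ₂ - s) + ω₃ * σ)) := by
    ext σ
    rw [show (φ₁ + ω₁ * σ) + (φ₂ + ω₂ * σ) - (s + σ) = (φ₁ + φ₂ - s) + ω₃ * σ by rw [hω₃]; ring]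
    ring
  have i1 := (integrable_separatrix_mul_cos τ ω₁ φ₁).const_mul (2 * a₁)
  have i2 := (integrable_separatrix_mul_cos τ ω₂ φ₂).const_mul (2 * a₂)
  have i3 := (integrable_separatrix_mul_cos τ ω₃ (φ₁ + φ₂ - s)).const_mul (2 * a₃)
  rw [hf]
  refine ⟨(i1.add i2).add i3, ?_⟩
  rw [integral_add (by exact i1.add i2) i3, integral_add i1 i2, integral_const_mul, integral_const_mul,
    integral_const_mul, integral_separatrix_mul_cos h1, integral_separatrix_mul_cos h2,
    integral_separatrix_mul_cos h3]
  ring
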